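/- Let γ > 0, let S be a finite set with |S| ≥ 2, and let P : S → ℝ satisfy P(x) > 0 for all x ∈ S and ∑_{x∈S} P(x) = 1. Suppose α > 0 and Q* : S → ℝ satisfy 0 < Q*(x) < 1, L'_γ(Q*(x)) = -α/P(x) for all x ∈ S, and ∑_{x∈S} Q*(x) = 1. Let p_min = min_{x∈S} P(x) and assume γ > κ(p_min). Then P majorizes Q*: for every subset A ⊆ S such that P(x) ≥ P(y) for all x ∈ A and y ∈ S∖A, one has ∑_{x∈A} Q*(x) ≤ ∑_{x∈A} P(x). -/

import Mathlib

/-- The closed form of the first derivative of the focal-loss,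
`L'_γ(p) = -(1-p)^(γ-1) (γ log(1/p) + (1-p)/p)`. -/
noncomputable def focalLossDeriv (γ p : ℝ) : ℝ :=
  -((1 - p) ^ (γ - 1) * (γ * Real.log (1 / p) + (1 - p) / p))

/-- `κ(p) = 1/p − 2(1-p)/(p log(1/p))`. -/
noncomputable def kappaFn (p : ℝ) : ℝ :=
  1 / p - 2 * (1 - p) / (p * Real.log (1 / p))

noncomputable def gAux (γ q : ℝ) : ℝ :=
  (1 - q) ^ (γ - 1) * (γ * (-Real.log q) + (1 - q) / q)

lemma gAux_hasDeriv (γ q : ℝ) (h0 : 0 < q) (h1 : q < 1) :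
    HasDerivAt (gAux γ) ((1 - q) ^ (γ - 1 - 1) *
      (γ * (1 - γ) * (-Real.log q) - 2 * γ * ((1 - q) / q) - ((1 - q) / q) ^ 2)) q := by
  have hp : 0 < 1 - q := by linarith
  have a : HasDerivAt (fun x : ℝ => 1 - x) (-1) q := by
    simpa using (hasDerivAt_id q).const_sub 1
  have b := a.rpow_const (p := γ - 1) (Or.inl hp.ne')
  have c := ((Real.hasDerivAt_log h0.ne').neg.const_mul γ).add (a.div (hasDerivAt_id q) h0.ne')
  have d := b.mul c
  have e : (1 - q) ^ (γ - 1) = (1 - q) ^ (γ - 1 - 1) * (1 - q) := by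
    rw [Real.rpow_sub_one hp.ne' (γ - 1)]; field_simp
  refine d.congr_deriv ?_
  simp only [Pi.add_apply, Pi.div_apply, Pi.neg_apply, id, e]
  field_simp
  ring

lemma gAux_strictAnti (γ : ℝ) (hγ : 0 < γ) : StrictAntiOn (gAux γ) (Set.Ioo 0 1) := by
  apply strictAntiOn_of_deriv_neg (convex_Ioo 0 1)
  · intro q hq
    exact (gAux_hasDeriv γ q hq.1 hq.2).continuousAt.continuousWithinAt
  · intro q hq
    rw [interior_Ioo] at hq
    rw [(gAux_hasDeriv γ q hq.1 hq.2).deriv]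
    have hq0 := hq.1
    have hp : 0 < 1 - q := by linarith [hq.2]
    have hu : 0 < (1 - q) / q := by positivity
    have hl : -Real.log q ≤ (1 - q) / q := by
      have := Real.log_le_sub_one_of_pos (inv_pos.2 hq0)
      rw [Real.log_inv] at this
      have e : (1 - q) / q = q⁻¹ - 1 := by field_simp
      linarith
    have hl0 : 0 < -Real.log q := by linarith [Real.log_neg hq0 hq.2]
    apply mul_neg_of_pos_of_neg (by positivity)
    nlinarith [mul_pos hγ hl0, mul_pos (mul_pos hγ hγ) hl0, mul_pos hγ hu,
      mul_le_mul_of_nonneg_left hl hγ.le, sq_nonneg ((1 - q) / q)]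

lemma h_neg (γ : ℝ) (hγ : 0 < γ) (p : ℝ) (h0 : 0 < p) (h1 : p < 1) (hk : kappaFn p < γ)
    (q : ℝ) (hq : p ≤ q) (hq1 : q < 1) :
    -Real.log q + γ * (q * Real.log q) - 2 * (1 - q) < 0 := by
  have hp : -Real.log p + γ * (p * Real.log p) - 2 * (1 - p) < 0 := by
    unfold kappaFn at hk
    rw [one_div p, Real.log_inv] at hk
    have hl0 : 0 < -Real.log p := by linarith [Real.log_neg h0 h1]
    have hm : 0 < p * -Real.log p := by positivity
    have := mul_lt_mul_of_pos_right hk hm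
    have e : (p⁻¹ - 2 * (1 - p) / (p * -Real.log p)) * (p * -Real.log p)
      = -Real.log p - 2 * (1 - p) := by
      rw [sub_mul, div_mul_cancel₀ _ hm.ne']; field_simp
    rw [e] at this
    linarith
  have hd : 0 < 1 - p := by linarith
  obtain ⟨t, ht⟩ : ∃ t, t = (1 - q) / (1 - p) := ⟨_, rfl⟩
  have ht0 : 0 < t := by rw [ht]; apply div_pos <;> linarith
  have ht1 : 0 ≤ 1 - t := by
    have : t ≤ 1 := by rw [ht, div_le_one hd]; linarith
    linarith
  have htq : t * p + (1 - t) * 1 = q := by rw [ht]; field_simp; ring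
  have c1 := strictConcaveOn_log_Ioi.concaveOn.2 (Set.mem_Ioi.2 h0) (Set.mem_Ioi.2 one_pos)
    ht0.le ht1 (by ring)
  have c2 := Real.convexOn_mul_log.2 (Set.mem_Ici.2 h0.le) (Set.mem_Ici.2 zero_le_one)
    ht0.le ht1 (by ring)
  simp only [smul_eq_mul, htq, Real.log_one, mul_zero, add_zero] at c1 c2
  have := mul_le_mul_of_nonneg_left c2 hγ.le
  have := mul_neg_of_pos_of_neg ht0 hp
  have e : 1 - q = t * (1 - p) := by linarith
  rw [e]
  linarith

lemma phi_anti (γ : ℝ) (hγ : 0 < γ) (p : ℝ) (h0 : 0 < p) (h1 : p < 1) (hk : kappaFn p < γ) :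
    AntitoneOn (fun q => q * gAux γ q) (Set.Ico p 1) := by
  have hd : ∀ q ∈ Set.Ico p 1, HasDerivAt (fun q => q * gAux γ q) _ q := fun q hq =>
    (hasDerivAt_id q).mul (gAux_hasDeriv γ q (h0.trans_le hq.1) hq.2)
  apply antitoneOn_of_deriv_nonpos (convex_Ico p 1)
  · intro q hq
    exact (hd q hq).continuousAt.continuousWithinAt
  · intro q hq
    exact (hd q (interior_subset hq)).differentiableAt.differentiableWithinAt
  · intro q hq
    replace hq := interior_subset hq
    rw [(hd q hq).deriv]
    have hq0 : 0 < q := h0.trans_le hq.1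
    have hp : 0 < 1 - q := by linarith [hq.2]
    have hn := h_neg γ hγ p h0 h1 hk q hq.1 hq.2
    have e : (1 - q) ^ (γ - 1) = (1 - q) ^ (γ - 1 - 1) * (1 - q) := by
      rw [Real.rpow_sub_one hp.ne' (γ - 1)]; field_simp
    have : 0 < (1 - q) ^ (γ - 1 - 1) := by positivity
    have := mul_neg_of_pos_of_neg (mul_pos this hγ) hn
    refine le_trans (le_of_eq ?_) this.le
    simp only [id, gAux, e]
    field_simp
    ring

/-- if `γ > κ(p_min)`, then `P` majorizes the focal-entropy
minimizer `Q*`: for every "upper" subset `A` (every element of `A` has `P`-mass at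
least that of every element outside `A`), `∑_{x∈A} Q* x ≤ ∑_{x∈A} P x`. -/
theorem focalEntropy_minimizer_majorized
    {ι : Type*} [Fintype ι] [Nonempty ι] (hcard : 2 ≤ Fintype.card ι)
    (γ : ℝ) (hγ : 0 < γ)
    (P : ι → ℝ) (hP : ∀ x, 0 < P x) (hPsum : ∑ x, P x = 1)
    (α : ℝ) (hα : 0 < α)
    (Qstar : ι → ℝ)
    (hQstar : ∀ x, 0 < Qstar x ∧ Qstar x < 1 ∧
      focalLossDeriv γ (Qstar x) = -α / P x)
    (hQstarsum : ∑ x, Qstar x = 1)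
    (hγκ : kappaFn (Finset.univ.inf' Finset.univ_nonempty P) < γ) :
    ∀ A : Finset ι, (∀ x ∈ A, ∀ y, y ∉ A → P y ≤ P x) →
      ∑ x ∈ A, Qstar x ≤ ∑ x ∈ A, P x := by
  obtain ⟨x0, -, hx0⟩ := Finset.exists_mem_eq_inf' Finset.univ_nonempty P
  have hmin : ∀ x, P x0 ≤ P x := fun x => hx0 ▸ Finset.inf'_le P (Finset.mem_univ x)
  rw [hx0] at hγκ
  have hp1 : P x0 < 1 := by
    obtain ⟨y, hy⟩ := Fintype.exists_ne_of_one_lt_card hcard x0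
    rw [← hPsum]
    exact Finset.single_lt_sum hy (Finset.mem_univ _) (Finset.mem_univ _) (hP y)
      (fun k _ _ => (hP k).le)
  have hg : ∀ x, P x * gAux γ (Qstar x) = α := by
    intro x
    have h := (hQstar x).2.2
    unfold focalLossDeriv at h
    rw [one_div, Real.log_inv] at h
    have hne := (hP x).ne'
    have : gAux γ (Qstar x) = α / P x := by
      unfold gAux; rw [neg_div] at h; linarith
    rw [this]; field_simp
  have hQI : ∀ x, Qstar x ∈ Set.Ioo (0:ℝ) 1 := fun x => ⟨(hQstar x).1, (hQstar x).2.1⟩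
  have hgpos : ∀ x, 0 < gAux γ (Qstar x) := fun x =>
    pos_of_mul_pos_right (by rw [hg x]; exact hα) (hP x).le
  have hanti := gAux_strictAnti γ hγ
  have hphi := phi_anti γ hγ (P x0) (hP x0) hp1 hγκ
  have hmono : ∀ x y, P y ≤ P x → Qstar y ≤ Qstar x := by
    intro x y h
    by_contra! hlt
    have h2 := hanti (hQI x) (hQI y) hlt
    have := mul_lt_mul_of_pos_left h2 (hP y)
    have := mul_le_mul_of_nonneg_right h (hgpos x).le
    linarith [hg x, hg y]
  have hlow : P x0 ≤ Qstar x0 := by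
    by_contra! hlt
    have h2 := mul_lt_mul_of_pos_left (hanti (hQI x0) ⟨hP x0, hp1⟩ hlt) (hP x0)
    rw [hg x0] at h2
    have : ∀ x, Qstar x < P x := by
      intro x
      by_cases hx : Qstar x < P x0
      · exact hx.trans_le (hmin x)
      · push Not at hx
        have h3 := hphi ⟨le_refl _, hp1⟩ ⟨hx, (hQI x).2⟩ hx
        simp only at h3
        have h4 : Qstar x * gAux γ (Qstar x) < P x * gAux γ (Qstar x) := by
          rw [hg x]; exact h3.trans_lt h2
        exact lt_of_mul_lt_mul_right h4 (hgpos x).le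
    have := Finset.sum_lt_sum_of_nonempty (s := Finset.univ) Finset.univ_nonempty
      (fun x _ => this x)
    linarith
  have hQge : ∀ x, Qstar x ∈ Set.Ico (P x0) 1 := fun x =>
    ⟨hlow.trans (hmono _ _ (hmin x)), (hQI x).2⟩
  intro A hA
  classical
  by_cases hall : ∀ x ∈ A, Qstar x ≤ P x
  · exact Finset.sum_le_sum hall
  · push Not at hall
    obtain ⟨x, hxA, hx⟩ := hall
    have hc : ∑ y ∈ Aᶜ, P y ≤ ∑ y ∈ Aᶜ, Qstar y := by
      apply Finset.sum_le_sum
      intro y hy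
      have h3 := hphi (hQge y) (hQge x) (hmono x y (hA x hxA y (Finset.mem_compl.1 hy)))
      simp only at h3
      have h4 := mul_lt_mul_of_pos_right hx (hgpos x)
      have h5 : P y * gAux γ (Qstar y) ≤ Qstar y * gAux γ (Qstar y) := by
        rw [hg y, ← hg x]; linarith
      exact le_of_mul_le_mul_right h5 (hgpos y)
    have e1 := Finset.sum_add_sum_compl A P
    have e2 := Finset.sum_add_sum_compl A Qstar
    linarith
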